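/- Let ψ : I → ℂ be measurable and suppose there exist C, p > 0 such that |ψ(x)| ≤ C (sin(x/2))^p for all x ∈ I. Then the kernel K(x,y) = ψ(x)* K₂(x,y) ψ(y) defines a compact, self-adjoint integral operator on L²(I). -/

import Mathlib

open MeasureTheory Real Set Filter
open scoped Topology ENNReal ComplexConjugate

noncomputable section

/-- The fundamental periodic cell `I = [0, 2π)`. -/
def II : Set ℝ := Set.Ico 0 (2 * π)

/-- Lebesgue measure restricted to `I`. -/
def muI : Measure ℝ := volume.restrict II

/-- The dispersion relation `ω(x) = |sin(x/2)|`. -/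
def omg (x : ℝ) : ℝ := |Real.sin (x / 2)|

/-- `Ω(x,y,z) = ω(x) + ω(y) − ω(z) − ω(x+y−z)`. -/
def Omg (x y z : ℝ) : ℝ := omg x + omg y - omg z - omg (x + y - z)

/-- The representative of `x` modulo `2π` lying in `[0, 2π)`. -/
def mod2pi (x : ℝ) : ℝ := x - 2 * π * (⌊x / (2 * π)⌋ : ℝ)

/-- `h` on the fundamental cell: `h(x,z) = (z−x)/2 + 2 arcsin( tan(|z−x|/4) cos((x+z)/4) )`. -/
def h0 (x z : ℝ) : ℝ :=
  (z - x) / 2 + 2 * Real.arcsin (Real.tan (|z - x| / 4) * Real.cos ((x + z) / 4))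

/-- The extension of `h` to all of `ℝ²`: `h(x,z) = h(x mod 2π, z mod 2π) − (x − (x mod 2π))`. -/
def hFPU (x z : ℝ) : ℝ := h0 (mod2pi x) (mod2pi z) - (x - mod2pi x)

/-- `F₊(x,y) = (cos(x/2)+cos(y/2))² + 4 sin(x/2) sin(y/2)`. -/
def Fp (x y : ℝ) : ℝ :=
  (Real.cos (x / 2) + Real.cos (y / 2)) ^ 2 + 4 * Real.sin (x / 2) * Real.sin (y / 2)

/-- `F₋(x,y) = (cos(x/2)+cos(y/2))² − 4 sin(x/2) sin(y/2)`. -/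
def Fm (x y : ℝ) : ℝ :=
  (Real.cos (x / 2) + Real.cos (y / 2)) ^ 2 - 4 * Real.sin (x / 2) * Real.sin (y / 2)

/-- The kernel `K₁(x,y) = 4·𝟙(F₋(x,y) > 0)/√(F₋(x,y))`. -/
def K1 (x y : ℝ) : ℝ := if 0 < Fm x y then 4 / Real.sqrt (Fm x y) else 0

/-- The kernel `K₂(x,y) = 2/√(F₊(x,y))`. -/
def K2 (x y : ℝ) : ℝ := 2 / Real.sqrt (Fp x y)

/-- `V(x) = ∫_I K₂(x,y) dy`. -/
def VV (x : ℝ) : ℝ := ∫ y in II, K2 x y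

/-- `W(x) = sin²(x/2)·V(x)`. -/
def WW (x : ℝ) : ℝ := Real.sin (x / 2) ^ 2 * VV x

/-!
For `x, y` in the interior of `I` one has `F₊(x,y) ≥ 4 sin(x/2) sin(y/2) > 0`, so the kernel is
bounded by `φ(x) φ(y)` with `φ = |ψ| / √sin(·/2)`. The hypothesis gives `φ² ≤ C² sin(·/2)^(2p-1)`,
which is integrable since `2p - 1 > -1`; hence the kernel lies in `L²(I × I)` and its operator is
Hilbert–Schmidt.

Hilbert–Schmidt operators are compact because the operator depends continuously on its kernel and
the kernels of rank-one operators are total in `L²(μ × ν)`: a kernel orthogonal to all of them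
induces the zero operator, hence integrates to zero over every rectangle of finite measure.
-/

section PiSystem

variable {α E : Type*} [m : MeasurableSpace α] {μ : Measure α}
  [NormedAddCommGroup E] [NormedSpace ℝ E] [CompleteSpace E]

lemma ae_eq_zero_of_forall_setIntegral_isPiSystem_eq_zero {C : Set (Set α)}
    (hgen : m = MeasurableSpace.generateFrom C) (hC : IsPiSystem C) {f : α → E}
    (hf : Integrable f μ) (huniv : ∫ x, f x ∂μ = 0) (h : ∀ s ∈ C, ∫ x in s, f x ∂μ = 0) :
    f =ᵐ[μ] 0 := by
  suffices ∀ s, MeasurableSet s → ∫ x in s, f x ∂μ = 0 from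
    hf.ae_eq_zero_of_forall_setIntegral_eq_zero fun s hs _ => this s hs
  intro s hs
  induction s, hs using MeasurableSpace.induction_on_inter hgen hC with
  | empty => exact setIntegral_empty
  | basic s hs => exact h s hs
  | compl s hs ih => rw [setIntegral_compl hs hf, huniv, ih, sub_zero]
  | iUnion s hdisj hs ih => simp only [integral_iUnion hs hdisj hf.integrableOn, ih, tsum_zero]

end PiSystem

section ProductMeasure

variable {α β E 𝕜 : Type*} [MeasurableSpace α] [MeasurableSpace β] {μ : Measure α} {ν : Measure β}
  [NormedAddCommGroup E] [RCLike 𝕜] {p : ℝ≥0∞}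

lemma ae_eq_zero_of_forall_setIntegral_prod_eq_zero [NormedSpace ℝ E] [CompleteSpace E]
    [SigmaFinite μ] [SigmaFinite ν] {f : α × β → E}
    (hf : ∀ s t, μ s < ∞ → ν t < ∞ → IntegrableOn f (s ×ˢ t) (μ.prod ν))
    (h : ∀ s t, MeasurableSet s → MeasurableSet t → μ s < ∞ → ν t < ∞ →
      ∫ z in s ×ˢ t, f z ∂μ.prod ν = 0) :
    f =ᵐ[μ.prod ν] 0 := by
  let R (n : ℕ) : Set (α × β) := spanningSets μ n ×ˢ spanningSets ν n
  have hR : ⋃ n, R n = univ := by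
    rw [iUnion_prod_of_monotone (monotone_spanningSets μ) (monotone_spanningSets ν),
      iUnion_spanningSets, iUnion_spanningSets, univ_prod_univ]
  rw [← Measure.restrict_univ (μ := μ.prod ν), ← hR]
  refine (ae_restrict_iUnion_iff _ _).2 fun n => ?_
  have hμ := measure_spanningSets_lt_top μ n
  have hν := measure_spanningSets_lt_top ν n
  refine ae_eq_zero_of_forall_setIntegral_isPiSystem_eq_zero generateFrom_prod.symm
    isPiSystem_prod (hf _ _ hμ hν)
    (h _ _ (measurableSet_spanningSets μ n) (measurableSet_spanningSets ν n) hμ hν) ?_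
  rintro _ ⟨s, hs, t, ht, rfl⟩
  rw [Measure.restrict_restrict (hs.prod ht), prod_inter_prod]
  exact h _ _ (hs.inter (measurableSet_spanningSets μ n))
    (ht.inter (measurableSet_spanningSets ν n))
    ((measure_mono inter_subset_right).trans_lt hμ) ((measure_mono inter_subset_right).trans_lt hν)

lemma ae_memLp_prodMk_left [SFinite μ] [SFinite ν] (hp₀ : p ≠ 0) (hp : p ≠ ∞)
    {f : α × β → E} (hf : MemLp f p (μ.prod ν)) : ∀ᵐ x ∂μ, MemLp (fun y => f (x, y)) p ν := by
  have hint := (integrable_norm_rpow_iff hf.1 hp₀ hp).2 hf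
  filter_upwards [hf.1.prodMk_left, hint.prod_right_ae] with x hmeas hx
  exact (integrable_norm_rpow_iff hmeas hp₀ hp).1 hx

lemma memLp_mul_prod [SFinite ν] (hp₀ : p ≠ 0) (hp : p ≠ ∞)
    {f : α → 𝕜} {g : β → 𝕜} (hf : MemLp f p μ) (hg : MemLp g p ν) :
    MemLp (fun z : α × β => f z.1 * g z.2) p (μ.prod ν) := by
  have hmeas : AEStronglyMeasurable (fun z : α × β => f z.1 * g z.2) (μ.prod ν) :=
    hf.1.comp_fst.mul hg.1.comp_snd
  have hint := ((integrable_norm_rpow_iff hf.1 hp₀ hp).2 hf).mul_prod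
    ((integrable_norm_rpow_iff hg.1 hp₀ hp).2 hg)
  refine (integrable_norm_rpow_iff hmeas hp₀ hp).1 ?_
  simpa only [norm_mul, Real.mul_rpow (norm_nonneg _) (norm_nonneg _)] using hint

lemma eLpNorm_prod_rpow_eq_lintegral [SFinite ν] (hp₀ : p ≠ 0) (hp : p ≠ ∞)
    {f : α × β → E} (hf : AEStronglyMeasurable f (μ.prod ν)) :
    eLpNorm f p (μ.prod ν) ^ p.toReal =
      ∫⁻ x, eLpNorm (fun y => f (x, y)) p ν ^ p.toReal ∂μ := by
  lift p to NNReal using hp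
  have hp₀ : p ≠ 0 := mod_cast hp₀
  simp only [ENNReal.coe_toReal, eLpNorm_nnreal_pow_eq_lintegral hp₀]
  exact lintegral_prod _ (hf.enorm.pow_const _)

end ProductMeasure

section KernelIntegral

variable {α β 𝕜 : Type*} [MeasurableSpace β] {ν : Measure β} [RCLike 𝕜]

/-- The integral transform `x ↦ ∫ K(x, y) f(y) dν(y)` of `f` with kernel `K`, as a function. Where
the integrand is not integrable it takes the value `0`. -/
def kernelIntegral (ν : Measure β) (K : α × β → 𝕜) (f : β → 𝕜) (x : α) : 𝕜 :=
  ∫ y, K (x, y) * f y ∂ν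

lemma kernelIntegral_smul_left (c : 𝕜) (K : α × β → 𝕜) (f : β → 𝕜) :
    kernelIntegral ν (c • K) f = c • kernelIntegral ν K f := by
  ext x
  simp only [kernelIntegral, Pi.smul_apply, smul_eq_mul, mul_assoc, integral_const_mul]

lemma kernelIntegral_smul_right (c : 𝕜) (K : α × β → 𝕜) (f : β → 𝕜) :
    kernelIntegral ν K (c • f) = c • kernelIntegral ν K f := by
  ext x
  simp only [kernelIntegral, Pi.smul_apply, smul_eq_mul, mul_left_comm _ c, integral_const_mul]

variable {p q : ℝ≥0∞} [p.HolderConjugate q]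

lemma enorm_integral_mul_le_eLpNorm_mul_eLpNorm (p q : ℝ≥0∞) [p.HolderConjugate q] {f g : β → 𝕜}
    (hf : AEStronglyMeasurable f ν) (hg : AEStronglyMeasurable g ν) :
    ‖∫ y, f y * g y ∂ν‖ₑ ≤ eLpNorm f p ν * eLpNorm g q ν :=
  calc ‖∫ y, f y * g y ∂ν‖ₑ ≤ ∫⁻ y, ‖f y * g y‖ₑ ∂ν := enorm_integral_le_lintegral_enorm _
    _ = eLpNorm (f • g) 1 ν := eLpNorm_one_eq_lintegral_enorm.symm
    _ ≤ eLpNorm f p ν * eLpNorm g q ν := eLpNorm_smul_le_mul_eLpNorm hg hf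

variable [MeasurableSpace α] {μ : Measure α} [SFinite ν]

lemma kernelIntegral_congr_ae {K K' : α × β → 𝕜} {f f' : β → 𝕜} (hK : K =ᵐ[μ.prod ν] K')
    (hf : f =ᵐ[ν] f') : kernelIntegral ν K f =ᵐ[μ] kernelIntegral ν K' f' := by
  filter_upwards [Measure.ae_ae_of_ae_prod hK] with x hx
  have hx : (fun y => K (x, y)) =ᵐ[ν] fun y => K' (x, y) := hx
  exact integral_congr_ae (hx.mul hf)

lemma eLpNorm_kernelIntegral_le (hp : p ≠ ∞) {K : α × β → 𝕜} {f : β → 𝕜}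
    (hK : MemLp K p (μ.prod ν)) (hf : MemLp f q ν) :
    eLpNorm (kernelIntegral ν K f) p μ ≤ eLpNorm K p (μ.prod ν) * eLpNorm f q ν := by
  have hp₀ : p ≠ 0 := ENNReal.HolderConjugate.ne_zero p q
  have hp_pos : 0 < p.toReal := ENNReal.toReal_pos hp₀ hp
  rw [← ENNReal.rpow_le_rpow_iff hp_pos]
  calc eLpNorm (kernelIntegral ν K f) p μ ^ p.toReal
      = ∫⁻ x, ‖kernelIntegral ν K f x‖ₑ ^ p.toReal ∂μ := by
        lift p to NNReal using hp
        exact eLpNorm_nnreal_pow_eq_lintegral (mod_cast hp₀)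
    _ ≤ ∫⁻ x, (eLpNorm (fun y => K (x, y)) p ν * eLpNorm f q ν) ^ p.toReal ∂μ := by
        refine lintegral_mono_ae ?_
        filter_upwards [hK.1.prodMk_left] with x hx
        gcongr
        exact enorm_integral_mul_le_eLpNorm_mul_eLpNorm p q hx hf.1
    _ = (eLpNorm K p (μ.prod ν) * eLpNorm f q ν) ^ p.toReal := by
        simp only [ENNReal.mul_rpow_of_nonneg _ _ hp_pos.le]
        rw [lintegral_mul_const' _ _ (ENNReal.rpow_ne_top_of_nonneg hp_pos.le hf.eLpNorm_ne_top),
          eLpNorm_prod_rpow_eq_lintegral hp₀ hp hK.1]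

lemma memLp_kernelIntegral (hp : p ≠ ∞) {K : α × β → 𝕜} {f : β → 𝕜}
    (hK : MemLp K p (μ.prod ν)) (hf : MemLp f q ν) : MemLp (kernelIntegral ν K f) p μ :=
  ⟨(hK.1.mul hf.1.comp_snd).integral_prod_right',
    (eLpNorm_kernelIntegral_le hp hK hf).trans_lt (ENNReal.mul_lt_top hK.2 hf.2)⟩

lemma norm_toLp_kernelIntegral_le (hp : p ≠ ∞) (K : Lp 𝕜 p (μ.prod ν)) (f : Lp 𝕜 q ν) :
    ‖(memLp_kernelIntegral hp (Lp.memLp K) (Lp.memLp f)).toLp _‖ ≤ ‖K‖ * ‖f‖ := by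
  rw [Lp.norm_toLp, Lp.norm_def, Lp.norm_def, ← ENNReal.toReal_mul]
  exact ENNReal.toReal_mono (ENNReal.mul_ne_top (Lp.eLpNorm_ne_top K) (Lp.eLpNorm_ne_top f))
    (eLpNorm_kernelIntegral_le hp (Lp.memLp K) (Lp.memLp f))

variable [SFinite μ]

lemma ae_integrable_kernel_mul (hp : p ≠ ∞) {K : α × β → 𝕜} {f : β → 𝕜}
    (hK : MemLp K p (μ.prod ν)) (hf : MemLp f q ν) :
    ∀ᵐ x ∂μ, Integrable (fun y => K (x, y) * f y) ν := by
  filter_upwards [ae_memLp_prodMk_left (ENNReal.HolderConjugate.ne_zero p q) hp hK] with x hx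
  exact hx.integrable_mul hf

lemma kernelIntegral_add_left_ae (hp : p ≠ ∞) {K L : α × β → 𝕜} {f : β → 𝕜}
    (hK : MemLp K p (μ.prod ν)) (hL : MemLp L p (μ.prod ν)) (hf : MemLp f q ν) :
    kernelIntegral ν (K + L) f =ᵐ[μ] kernelIntegral ν K f + kernelIntegral ν L f := by
  filter_upwards [ae_integrable_kernel_mul hp hK hf, ae_integrable_kernel_mul hp hL hf]
    with x hKf hLf
  simp only [kernelIntegral, Pi.add_apply, add_mul, integral_add hKf hLf]

lemma kernelIntegral_add_right_ae (hp : p ≠ ∞) {K : α × β → 𝕜} {f g : β → 𝕜}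
    (hK : MemLp K p (μ.prod ν)) (hf : MemLp f q ν) (hg : MemLp g q ν) :
    kernelIntegral ν K (f + g) =ᵐ[μ] kernelIntegral ν K f + kernelIntegral ν K g := by
  filter_upwards [ae_integrable_kernel_mul hp hK hf, ae_integrable_kernel_mul hp hK hg]
    with x hKf hKg
  simp only [kernelIntegral, Pi.add_apply, mul_add, integral_add hKf hKg]

end KernelIntegral

lemma isCompactOperator_rankOne {𝕜 E F : Type*} [RCLike 𝕜] [SeminormedAddCommGroup E]
    [NormedSpace 𝕜 E] [SeminormedAddCommGroup F] [InnerProductSpace 𝕜 F] (u : E) (v : F) :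
    IsCompactOperator (InnerProductSpace.rankOne 𝕜 u v) :=
  (isCompactOperator_of_locallyCompactSpace_dom (innerSL 𝕜 v)).clm_comp
    (ContinuousLinearMap.toSpanSingleton 𝕜 u)

section HilbertSchmidt

variable {α β 𝕜 : Type*} [MeasurableSpace α] [MeasurableSpace β] {μ : Measure α} {ν : Measure β}
  [RCLike 𝕜]

section SFinite

variable [SFinite ν]

lemma memLp_mul_conj_prod (u : Lp 𝕜 2 μ) (v : Lp 𝕜 2 ν) :
    MemLp (fun z : α × β => u z.1 * conj (v z.2)) 2 (μ.prod ν) :=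
  memLp_mul_prod two_ne_zero ENNReal.ofNat_ne_top (Lp.memLp u) (Lp.memLp v).star

variable [SFinite μ]

/-- The Hilbert–Schmidt integral operator `f ↦ ∫ K(·, y) f(y) dν(y)` from `L²(ν)` to `L²(μ)` with
kernel `K ∈ L²(μ × ν)`, as a continuous bilinear map in `K` and `f`. -/
def hilbertSchmidt : Lp 𝕜 2 (μ.prod ν) →L[𝕜] Lp 𝕜 2 ν →L[𝕜] Lp 𝕜 2 μ :=
  LinearMap.mkContinuous₂
    (LinearMap.mk₂ 𝕜
      (fun K f => (memLp_kernelIntegral ENNReal.ofNat_ne_top (Lp.memLp K) (Lp.memLp f)).toLp _)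
      (fun K L f => by
        rw [← MemLp.toLp_add]
        exact MemLp.toLp_congr _ _ <| (kernelIntegral_congr_ae (Lp.coeFn_add K L) .rfl).trans <|
          kernelIntegral_add_left_ae ENNReal.ofNat_ne_top (Lp.memLp K) (Lp.memLp L) (Lp.memLp f))
      (fun c K f => by
        rw [← MemLp.toLp_const_smul]
        exact MemLp.toLp_congr _ _ <| (kernelIntegral_congr_ae (Lp.coeFn_smul c K) .rfl).trans <|
          .of_eq <| kernelIntegral_smul_left c K f)
      (fun K f g => by
        rw [← MemLp.toLp_add]
        exact MemLp.toLp_congr _ _ <| (kernelIntegral_congr_ae .rfl (Lp.coeFn_add f g)).trans <|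
          kernelIntegral_add_right_ae ENNReal.ofNat_ne_top (Lp.memLp K) (Lp.memLp f) (Lp.memLp g))
      (fun c K f => by
        rw [← MemLp.toLp_const_smul]
        exact MemLp.toLp_congr _ _ <| (kernelIntegral_congr_ae .rfl (Lp.coeFn_smul c f)).trans <|
          .of_eq <| kernelIntegral_smul_right c K f))
    1 fun K f =>
      (norm_toLp_kernelIntegral_le ENNReal.ofNat_ne_top K f).trans_eq (by rw [one_mul])

lemma coeFn_hilbertSchmidt (K : Lp 𝕜 2 (μ.prod ν)) (f : Lp 𝕜 2 ν) :
    hilbertSchmidt K f =ᵐ[μ] kernelIntegral ν K f :=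
  MemLp.coeFn_toLp (memLp_kernelIntegral ENNReal.ofNat_ne_top (Lp.memLp K) (Lp.memLp f))

lemma coeFn_hilbertSchmidt_toLp {K : α × β → 𝕜} (hK : MemLp K 2 (μ.prod ν)) (f : Lp 𝕜 2 ν) :
    hilbertSchmidt (hK.toLp K) f =ᵐ[μ] kernelIntegral ν K f :=
  (coeFn_hilbertSchmidt _ f).trans (kernelIntegral_congr_ae hK.coeFn_toLp .rfl)

lemma coeFn_hilbertSchmidt_indicatorConstLp (K : Lp 𝕜 2 (μ.prod ν)) {t : Set β}
    (ht : MeasurableSet t) (hνt : ν t ≠ ∞) :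
    hilbertSchmidt K (indicatorConstLp 2 ht hνt 1) =ᵐ[μ] fun x => ∫ y in t, K (x, y) ∂ν := by
  refine (coeFn_hilbertSchmidt K _).trans <|
    (kernelIntegral_congr_ae .rfl indicatorConstLp_coeFn).trans <| .of_eq <| funext fun x => ?_
  rw [kernelIntegral, ← integral_indicator ht]
  refine integral_congr_ae (.of_forall fun y => ?_)
  by_cases hy : y ∈ t <;> simp [hy]

/-- The kernel `u(x) v(y)*` of the rank-one operator `f ↦ ⟪v, f⟫ u`. -/
def rankOneKernel (u : Lp 𝕜 2 μ) (v : Lp 𝕜 2 ν) : Lp 𝕜 2 (μ.prod ν) :=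
  (memLp_mul_conj_prod u v).toLp _

lemma hilbertSchmidt_rankOneKernel (u : Lp 𝕜 2 μ) (v : Lp 𝕜 2 ν) :
    hilbertSchmidt (rankOneKernel u v) = InnerProductSpace.rankOne 𝕜 u v := by
  ext1 f
  refine Lp.ext ((coeFn_hilbertSchmidt_toLp (memLp_mul_conj_prod u v) f).trans ?_)
  rw [InnerProductSpace.rankOne_apply]
  filter_upwards [Lp.coeFn_smul (inner 𝕜 v f) u] with x hx
  rw [hx, Pi.smul_apply, smul_eq_mul, L2.inner_def, mul_comm]
  simp only [RCLike.inner_apply', kernelIntegral, mul_assoc, integral_const_mul]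

lemma inner_hilbertSchmidt (u : Lp 𝕜 2 μ) (K : Lp 𝕜 2 (μ.prod ν)) (v : Lp 𝕜 2 ν) :
    inner 𝕜 u (hilbertSchmidt K v) = inner 𝕜 (rankOneKernel u v) K := by
  have hint : Integrable (fun z : α × β => K z * conj (u z.1 * conj (v z.2))) (μ.prod ν) :=
    (Lp.memLp K).integrable_mul (memLp_mul_conj_prod u v).star
  calc inner 𝕜 u (hilbertSchmidt K v)
      = ∫ x, ∫ y, K (x, y) * conj (u x * conj (v y)) ∂ν ∂μ := by
        rw [L2.inner_def]
        refine integral_congr_ae ?_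
        filter_upwards [coeFn_hilbertSchmidt K v] with x hx
        simp only [hx, RCLike.inner_apply, kernelIntegral, ← integral_mul_const, map_mul,
          RCLike.conj_conj, mul_assoc, mul_comm (v _)]
    _ = ∫ z, K z * conj (u z.1 * conj (v z.2)) ∂μ.prod ν := (integral_prod _ hint).symm
    _ = inner 𝕜 (rankOneKernel u v) K := by
        rw [L2.inner_def]
        refine integral_congr_ae ?_
        filter_upwards [(memLp_mul_conj_prod u v).coeFn_toLp] with z hz
        rw [RCLike.inner_apply, rankOneKernel, hz]

lemma adjoint_hilbertSchmidt {K : Lp 𝕜 2 (μ.prod ν)} {L : Lp 𝕜 2 (ν.prod μ)}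
    (h : ∀ᵐ z ∂ν.prod μ, L z = conj (K z.swap)) :
    (hilbertSchmidt K).adjoint = hilbertSchmidt L := by
  symm
  rw [ContinuousLinearMap.eq_adjoint_iff]
  intro u v
  rw [inner_hilbertSchmidt, ← inner_conj_symm, inner_hilbertSchmidt, L2.inner_def, L2.inner_def,
    ← integral_conj, ← integral_prod_swap]
  refine integral_congr_ae ?_
  have hswap : Measure.QuasiMeasurePreserving (Prod.swap : α × β → β × α) (μ.prod ν) (ν.prod μ) :=
    Measure.measurePreserving_swap.quasiMeasurePreserving
  filter_upwards [hswap.ae h, hswap.ae (memLp_mul_conj_prod v u).coeFn_toLp,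
    (memLp_mul_conj_prod u v).coeFn_toLp] with z hL hvu huv
  simp only [rankOneKernel, RCLike.inner_apply, hL, hvu, huv, map_mul, RCLike.conj_conj,
    Prod.fst_swap, Prod.snd_swap, Prod.swap_swap]
  ring

end SFinite

variable [SigmaFinite μ] [SigmaFinite ν]

lemma hilbertSchmidt_injective :
    Function.Injective (hilbertSchmidt : Lp 𝕜 2 (μ.prod ν) → Lp 𝕜 2 ν →L[𝕜] Lp 𝕜 2 μ) := by
  refine (injective_iff_map_eq_zero _).2 fun K hK => (Lp.eq_zero_iff_ae_eq_zero).2 ?_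
  have hK_int (s : Set α) (t : Set β) (hs : μ s < ∞) (ht : ν t < ∞) :
      IntegrableOn K (s ×ˢ t) (μ.prod ν) := by
    refine integrableOn_Lp_of_measure_ne_top K fact_one_le_two_ennreal.elim ?_
    rw [Measure.prod_prod]
    exact ENNReal.mul_ne_top hs.ne ht.ne
  refine ae_eq_zero_of_forall_setIntegral_prod_eq_zero hK_int fun s t _ ht hμs hνt => ?_
  have hK_t : (fun x => ∫ y in t, K (x, y) ∂ν) =ᵐ[μ] 0 := by
    have hzero := coeFn_hilbertSchmidt_indicatorConstLp K ht hνt.ne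
    rw [hK, zero_apply] at hzero
    exact hzero.symm.trans (Lp.coeFn_zero 𝕜 2 μ)
  rw [setIntegral_prod _ (hK_int s t hμs hνt)]
  exact integral_eq_zero_of_ae (ae_restrict_of_ae hK_t)

theorem isCompactOperator_hilbertSchmidt (K : Lp 𝕜 2 (μ.prod ν)) :
    IsCompactOperator (hilbertSchmidt K) := by
  let V : Submodule 𝕜 (Lp 𝕜 2 (μ.prod ν)) :=
    (compactOperator (RingHom.id 𝕜) (Lp 𝕜 2 ν) (Lp 𝕜 2 μ)).comap
      (hilbertSchmidt : Lp 𝕜 2 (μ.prod ν) →L[𝕜] Lp 𝕜 2 ν →L[𝕜] Lp 𝕜 2 μ).toLinearMap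
  have hV_closed : IsClosed (V : Set (Lp 𝕜 2 (μ.prod ν))) :=
    isClosed_setOfPred_isCompactOperator.preimage
      (hilbertSchmidt : Lp 𝕜 2 (μ.prod ν) →L[𝕜] Lp 𝕜 2 ν →L[𝕜] Lp 𝕜 2 μ).continuous
  have hV_rankOne (u : Lp 𝕜 2 μ) (v : Lp 𝕜 2 ν) : rankOneKernel u v ∈ V := by
    change IsCompactOperator (hilbertSchmidt (rankOneKernel u v))
    rw [hilbertSchmidt_rankOneKernel]
    exact isCompactOperator_rankOne u v
  have hV_orthogonal : Vᗮ = ⊥ := by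
    refine (Submodule.eq_bot_iff _).2 fun L hL => hilbertSchmidt_injective ?_
    rw [map_zero]
    ext1 v
    refine ext_inner_left 𝕜 fun u => ?_
    rw [inner_hilbertSchmidt, hL _ (hV_rankOne u v), zero_apply, inner_zero_right]
  have hV_top : V = ⊤ := by
    rw [← hV_closed.submodule_topologicalClosure_eq, Submodule.topologicalClosure_eq_top_iff,
      hV_orthogonal]
  have hK : K ∈ V := hV_top ▸ Submodule.mem_top
  exact hK

end HilbertSchmidt

section SinPower

lemma intervalIntegrable_sin_rpow_zero_pi_div_two {q : ℝ} (hq : -1 < q) :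
    IntervalIntegrable (fun x => sin x ^ q) volume 0 (π / 2) := by
  have hsinc {x : ℝ} (hx : x ∈ uIcc 0 (π / 2)) : 0 < sinc x := by
    rw [uIcc_of_le pi_div_two_pos.le] at hx
    rcases hx.1.eq_or_lt with rfl | hx₀
    · simp
    · rw [sinc_of_ne_zero hx₀.ne']
      exact div_pos (sin_pos_of_pos_of_lt_pi hx₀ (hx.2.trans_lt (half_lt_self pi_pos))) hx₀
  -- `sin x = x * sinc x`, and `sinc` is continuous and positive up to the endpoint `0`.
  have hint : IntervalIntegrable (fun x => sinc x ^ q * x ^ q) volume 0 (π / 2) :=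
    (intervalIntegral.intervalIntegrable_rpow' hq).continuousOn_mul <|
      continuous_sinc.continuousOn.rpow_const fun x hx => .inl (hsinc hx).ne'
  refine hint.congr fun x hx => ?_
  have hx' := hsinc (uIoc_subset_uIcc hx)
  rw [uIoc_of_le pi_div_two_pos.le] at hx
  change sinc x ^ q * x ^ q = sin x ^ q
  rw [← Real.mul_rpow hx'.le hx.1.le, sinc_of_ne_zero hx.1.ne', div_mul_cancel₀ _ hx.1.ne']

lemma intervalIntegrable_sin_rpow_zero_pi {q : ℝ} (hq : -1 < q) :
    IntervalIntegrable (fun x => sin x ^ q) volume 0 π := by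
  have hleft := intervalIntegrable_sin_rpow_zero_pi_div_two hq
  have hright := (hleft.comp_sub_left π).symm
  simp only [sin_pi_sub, sub_zero, sub_half] at hright
  exact hleft.trans hright

end SinPower

section FundamentalCell

instance : IsFiniteMeasure muI := by
  unfold muI II
  infer_instance

lemma ae_muI_sin_half_pos : ∀ᵐ x ∂muI, 0 < sin (x / 2) := by
  rw [muI, II, Measure.restrict_congr_set Ioo_ae_eq_Ico.symm]
  filter_upwards [ae_restrict_mem measurableSet_Ioo] with x hx
  exact sin_pos_of_pos_of_lt_pi (half_pos hx.1) (by linarith [hx.2])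

lemma integrable_sin_half_rpow_muI {q : ℝ} (hq : -1 < q) :
    Integrable (fun x => sin (x / 2) ^ q) muI := by
  have hint := (intervalIntegrable_sin_rpow_zero_pi hq).comp_mul_left (c := 2⁻¹)
  simp only [zero_mul, div_inv_eq_mul, inv_mul_eq_div, mul_comm π] at hint
  exact (intervalIntegrable_iff_integrableOn_Ico_of_le two_pi_pos.le).1 hint

lemma memLp_div_sqrt_sin_half_of_norm_le {ψ : ℝ → ℂ} (hψ : AEStronglyMeasurable ψ muI) {C p : ℝ}
    (hp : 0 < p) (hbound : ∀ x ∈ II, ‖ψ x‖ ≤ C * sin (x / 2) ^ p) :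
    MemLp (fun x => ψ x / (√(sin (x / 2)) : ℝ)) 2 muI := by
  have hmeas : AEStronglyMeasurable (fun x => ψ x / (√(sin (x / 2)) : ℝ)) muI :=
    (hψ.aemeasurable.div (by fun_prop)).aestronglyMeasurable
  refine (memLp_two_iff_integrable_sq_norm hmeas).2 ?_
  refine ((integrable_sin_half_rpow_muI (q := 2 * p - 1) (by linarith)).const_mul (C ^ 2)).mono'
    (hmeas.norm.pow 2) ?_
  have hII : ∀ᵐ x ∂muI, x ∈ II := ae_restrict_mem measurableSet_Ico
  filter_upwards [ae_muI_sin_half_pos, hII] with x hx hxI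
  calc ‖‖ψ x / (√(sin (x / 2)) : ℝ)‖ ^ 2‖ = ‖ψ x‖ ^ 2 / sin (x / 2) := by
        rw [norm_pow, norm_norm, norm_div, Complex.norm_real, div_pow, norm_eq_abs, sq_abs,
          sq_sqrt hx.le]
    _ ≤ (C * sin (x / 2) ^ p) ^ 2 / sin (x / 2) := by gcongr; exact hbound x hxI
    _ = C ^ 2 * sin (x / 2) ^ (2 * p - 1) := by
        rw [mul_pow, mul_div_assoc, rpow_sub_one hx.ne', mul_comm 2 p, rpow_mul hx.le, rpow_two]

end FundamentalCell

section K2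

lemma K2_comm (x y : ℝ) : K2 x y = K2 y x := by
  simp only [K2, Fp, add_comm (cos (x / 2)), mul_right_comm 4 (sin (x / 2))]

lemma K2_nonneg (x y : ℝ) : 0 ≤ K2 x y :=
  div_nonneg zero_le_two (sqrt_nonneg _)

lemma measurable_uncurry_K2 : Measurable fun z : ℝ × ℝ => K2 z.1 z.2 := by
  unfold K2 Fp
  fun_prop

lemma K2_le_inv_sqrt_mul_inv_sqrt {x y : ℝ} (hx : 0 < sin (x / 2)) (hy : 0 < sin (y / 2)) :
    K2 x y ≤ (√(sin (x / 2)))⁻¹ * (√(sin (y / 2)))⁻¹ := by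
  have hF : 2 * (√(sin (x / 2)) * √(sin (y / 2))) ≤ √(Fp x y) := by
    refine le_sqrt_of_sq_le ?_
    rw [mul_pow, mul_pow, sq_sqrt hx.le, sq_sqrt hy.le, Fp]
    linarith [sq_nonneg (cos (x / 2) + cos (y / 2))]
  calc K2 x y ≤ 2 / (2 * (√(sin (x / 2)) * √(sin (y / 2)))) := by
        unfold K2
        gcongr
    _ = (√(sin (x / 2)))⁻¹ * (√(sin (y / 2)))⁻¹ := by
        rw [div_mul_cancel_left₀ two_ne_zero, mul_inv]

end K2

lemma memLp_K2_kernel {ψ : ℝ → ℂ} (hψ : MemLp (fun x => ψ x / (√(sin (x / 2)) : ℝ)) 2 muI) :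
    MemLp (fun z : ℝ × ℝ => conj (ψ z.1) * (K2 z.1 z.2 : ℝ) * ψ z.2) 2 (muI.prod muI) := by
  have hψ_meas : AEStronglyMeasurable ψ muI := by
    have hsqrt : AEStronglyMeasurable (fun x => ((√(sin (x / 2)) : ℝ) : ℂ)) muI := by fun_prop
    refine (hψ.1.mul hsqrt).congr ?_
    filter_upwards [ae_muI_sin_half_pos] with x hx
    exact div_mul_cancel₀ _ (Complex.ofReal_ne_zero.2 (sqrt_pos.2 hx).ne')
  have hK2_meas : AEStronglyMeasurable (fun z : ℝ × ℝ => (K2 z.1 z.2 : ℂ)) (muI.prod muI) :=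
    (Complex.measurable_ofReal.comp measurable_uncurry_K2).aestronglyMeasurable
  refine (memLp_mul_prod two_ne_zero ENNReal.ofNat_ne_top hψ hψ).of_le
    ((hψ_meas.comp_fst.star.mul hK2_meas).mul hψ_meas.comp_snd) ?_
  filter_upwards [Measure.quasiMeasurePreserving_fst.ae ae_muI_sin_half_pos,
    Measure.quasiMeasurePreserving_snd.ae ae_muI_sin_half_pos] with z hz₁ hz₂
  calc ‖conj (ψ z.1) * (K2 z.1 z.2 : ℝ) * ψ z.2‖ = ‖ψ z.1‖ * K2 z.1 z.2 * ‖ψ z.2‖ := by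
        rw [norm_mul, norm_mul, RCLike.norm_conj, Complex.norm_of_nonneg (K2_nonneg _ _)]
    _ ≤ ‖ψ z.1‖ * ((√(sin (z.1 / 2)))⁻¹ * (√(sin (z.2 / 2)))⁻¹) * ‖ψ z.2‖ := by
        gcongr
        exact K2_le_inv_sqrt_mul_inv_sqrt hz₁ hz₂
    _ = ‖ψ z.1 / (√(sin (z.1 / 2)) : ℝ) * (ψ z.2 / (√(sin (z.2 / 2)) : ℝ))‖ := by
        rw [norm_mul, norm_div, norm_div, Complex.norm_of_nonneg (sqrt_nonneg _),
          Complex.norm_of_nonneg (sqrt_nonneg _)]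
        ring

theorem K2_kernel_compact_general (ψ : ℝ → ℂ)
    (hψ : MemLp (fun x => ψ x / (√(sin (x / 2)) : ℝ)) 2 muI) :
    ∃ T : Lp ℂ 2 muI →L[ℂ] Lp ℂ 2 muI,
      IsCompactOperator T ∧ IsSelfAdjoint T ∧
      ∀ f : Lp ℂ 2 muI,
        (T f : ℝ → ℂ) =ᵐ[muI]
          fun x => ∫ y in II, (starRingEnd ℂ) (ψ x) * (K2 x y : ℝ) * ψ y * f y := by
  have hK := memLp_K2_kernel hψ
  refine ⟨hilbertSchmidt (hK.toLp _), isCompactOperator_hilbertSchmidt _,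
    ContinuousLinearMap.isSelfAdjoint_iff'.2 (adjoint_hilbertSchmidt ?_),
    coeFn_hilbertSchmidt_toLp hK⟩
  filter_upwards [hK.coeFn_toLp,
    Measure.measurePreserving_swap.quasiMeasurePreserving.ae hK.coeFn_toLp] with z hz hz_swap
  rw [hz, hz_swap]
  simp only [Prod.fst_swap, Prod.snd_swap, map_mul, Complex.conj_conj, Complex.conj_ofReal,
    K2_comm z.2 z.1]
  ring

/-- **Proposition 4.3.**  If `ψ` is measurable with `|ψ(x)| ≤ C sin(x/2)^p` on `I` for some
`C, p > 0`, then the kernel `K(x,y) = ψ(x)* K₂(x,y) ψ(y)` defines a compact self-adjoint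
integral operator on `L²(I)`. -/
theorem K2_kernel_compact
    (ψ : ℝ → ℂ) (hmeas : Measurable ψ) (C p : ℝ) (hC : 0 < C) (hp : 0 < p)
    (hbound : ∀ x ∈ II, ‖ψ x‖ ≤ C * Real.sin (x / 2) ^ p) :
    ∃ T : Lp ℂ 2 muI →L[ℂ] Lp ℂ 2 muI,
      IsCompactOperator T ∧ IsSelfAdjoint T ∧
      ∀ f : Lp ℂ 2 muI,
        (T f : ℝ → ℂ) =ᵐ[muI]
          fun x => ∫ y in II, (starRingEnd ℂ) (ψ x) * (K2 x y : ℝ) * ψ y * f y := by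
  exact K2_kernel_compact_general ψ
    (memLp_div_sqrt_sin_half_of_norm_le hmeas.aestronglyMeasurable hp hbound)
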